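/- Let α be a type, let I be a type of labels equipped with a transitive, well-founded (hence irreflexive) order ≻, and let (→_ℓ)_{ℓ∈I} be a family of binary relations on α with union → = ⋃_{ℓ∈I} →_ℓ. Suppose that every local peak is decreasing, i.e., for all labels ℓ, κ and all a, b, c with b ←_ℓ a and a →_κ c there exist b₁, b₂, c₂, c₁ such that b ↔*_{⋎ℓ} b₁, (b₁ →_κ b₂ or b₁ = b₂), b₂ ↔*_{⋎{ℓ,κ}} c₂, (c₁ →_ℓ c₂ or c₁ = c₂), and c₁ ↔*_{⋎κ} c. Then → is confluent: whenever a →* b and a →* c there exists d with b →* d and c →* d. -/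

import Mathlib

/-- Union of a labelled family of relations. -/
def LabelledUnion {α I : Type*} (r : I → α → α → Prop) : α → α → Prop :=
  fun a b => ∃ l, r l a b

/-- Union of the relations whose label lies in `J`. -/
def RelOver {α I : Type*} (r : I → α → α → Prop) (J : Set I) : α → α → Prop :=
  fun a b => ∃ l ∈ J, r l a b

/-- Conversion: reflexive–transitive closure of the symmetric closure. -/
def Conv {α : Type*} (r : α → α → Prop) : α → α → Prop :=
  Relation.ReflTransGen (fun a b => r a b ∨ r b a)

namespace DD

open Relation

section
variable {α L : Type*} [LinearOrder L] (r : L → α → α → Prop)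

/-- conversion below `m` -/
def C (m : L) : α → α → Prop := Conv (RelOver r {j | j < m})

/-- `p`-step or equality -/
def E (p : L) (a b : α) : Prop := r p a b ∨ a = b

/-- at most one `t`-step modulo conversion below `t` -/
def S (t : L) (a d : α) : Prop := ∃ b c, C r t a b ∧ E r t b c ∧ C r t c d

/-- decreasing completion -/
def Concl (p q : L) (y z : α) : Prop :=
  ∃ b₁ b₂ c₂ c₁, C r p y b₁ ∧ E r q b₁ b₂ ∧ C r (max p q) b₂ c₂ ∧ E r p c₁ c₂ ∧ C r q c₁ z

def G (m : L) : Prop := ∀ p q, m ≤ p → m ≤ q → ∀ y a b z,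
  r p a y → C r m a b → r q b z → Concl r p q y z

def BB (m : L) : Prop := ∀ p, m ≤ p → ∀ b a y, C r m b a → r p a y →
  ∃ b' y', ReflTransGen (RelOver r {j | j < m}) b b' ∧ E r p b' y' ∧ C r p y' y

variable {r}

theorem conv_symm {s : α → α → Prop} {a b : α} (h : Conv s a b) : Conv s b a := by
  induction h with
  | refl => exact ReflTransGen.refl
  | tail _ h ih => exact ReflTransGen.head h.symm ih

theorem C.rfl {m : L} {a : α} : C r m a a := ReflTransGen.refl

theorem C.symm {m : L} {a b : α} (h : C r m a b) : C r m b a := conv_symm h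

theorem C.trans {m : L} {a b c : α} (h : C r m a b) (h' : C r m b c) : C r m a c :=
  ReflTransGen.trans h h'

theorem relOver_mono {I : Type*} {r : I → α → α → Prop} {J K : Set I} (h : J ⊆ K) {a b : α}
    (hab : RelOver r J a b) : RelOver r K a b := by
  obtain ⟨l, hl, hr⟩ := hab
  exact ⟨l, h hl, hr⟩

theorem conv_mono {s s' : α → α → Prop} (h : ∀ a b, s a b → s' a b) {a b : α}
    (hab : Conv s a b) : Conv s' a b :=
  ReflTransGen.mono (fun _ _ hh => hh.imp (h _ _) (h _ _)) _ _ hab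

theorem C.mono {m n : L} (hmn : m ≤ n) {a b : α} (h : C r m a b) : C r n a b :=
  conv_mono (fun _ _ => relOver_mono (fun _ hj => lt_of_lt_of_le hj hmn)) h

theorem E.toC {p m : L} (hpm : p < m) {a b : α} (h : E r p a b) : C r m a b := by
  rcases h with h | rfl
  · exact ReflTransGen.single (Or.inl ⟨p, hpm, h⟩)
  · exact C.rfl

theorem S.toC {t m : L} (h : t < m) {a b : α} (hs : S r t a b) : C r m a b := by
  obtain ⟨x, y, h1, h2, h3⟩ := hs
  exact (h1.mono h.le).trans ((h2.toC h).trans (h3.mono h.le))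

theorem SS.toC {t m : L} (h : t < m) {a b : α} (hs : ReflTransGen (S r t) a b) : C r m a b := by
  induction hs with
  | refl => exact C.rfl
  | tail _ hs ih => exact ih.trans (hs.toC h)

theorem S.symm_diamond {t : L} (g : G r t) {a b c : α} (h : S r t a b) (h' : S r t a c) :
    ∃ d, S r t b d ∧ S r t c d := by
  obtain ⟨x, y, h1, h2, h3⟩ := h
  obtain ⟨x', y', h1', h2', h3'⟩ := h'
  rcases h2 with h2 | rfl
  · rcases h2' with h2' | rfl
    · obtain ⟨b1, b2, c2, c1, k1, k2, k3, k4, k5⟩ :=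
        g t t le_rfl le_rfl y x x' y' h2 (h1.symm.trans h1') h2'
      rw [max_self] at k3
      exact ⟨b2, ⟨b1, b2, h3.symm.trans k1, k2, C.rfl⟩,
        ⟨c1, c2, h3'.symm.trans k5.symm, k4, k3.symm⟩⟩
    · exact ⟨b, ⟨b, b, C.rfl, Or.inr rfl, C.rfl⟩,
        ⟨x, y, h3'.symm.trans (h1'.symm.trans h1), Or.inl h2, h3⟩⟩
  · exact ⟨c, ⟨x', y', h3.symm.trans (h1.symm.trans h1'), h2', h3'⟩,
      ⟨c, c, C.rfl, Or.inr rfl, C.rfl⟩⟩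

/-- Every nontrivial conversion has a maximal label. -/
theorem C.max_label {m : L} {a b : α} (h : C r m a b) :
    a = b ∨ ∃ t, t < m ∧ Conv (RelOver r {j | j ≤ t}) a b := by
  induction h with
  | refl => exact Or.inl (Eq.refl _)
  | @tail b c _ h ih =>
    right
    have : ∃ l, l < m ∧ (r l b c ∨ r l c b) := by
      rcases h with ⟨l, hl, h⟩ | ⟨l, hl, h⟩
      · exact ⟨l, hl, Or.inl h⟩
      · exact ⟨l, hl, Or.inr h⟩
    obtain ⟨l, hl, h⟩ := this
    have step : ∀ t, l ≤ t → Conv (RelOver r {j | j ≤ t}) b c := fun t ht =>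
      ReflTransGen.single (h.imp (fun h => ⟨l, ht, h⟩) (fun h => ⟨l, ht, h⟩))
    rcases ih with rfl | ⟨t, ht, ih⟩
    · exact ⟨l, hl, step l le_rfl⟩
    · exact ⟨max t l, max_lt ht hl, ReflTransGen.trans
        (conv_mono (fun _ _ => relOver_mono (fun j hj => le_trans hj (le_max_left t l))) ih)
        (step _ (le_max_right t l))⟩

theorem conv_join {t : L} (g : G r t) {a b : α} (h : Conv (RelOver r {j | j ≤ t}) a b) :
    ∃ d, ReflTransGen (S r t) a d ∧ ReflTransGen (S r t) b d := by
  have one : ∀ x y, RelOver r {j | j ≤ t} x y → S r t x y := by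
    rintro x y ⟨l, hl, hxy⟩
    rcases lt_or_eq_of_le (show l ≤ t from hl) with hl | rfl
    · exact ⟨y, y, E.toC hl (Or.inl hxy), Or.inr rfl, C.rfl⟩
    · exact ⟨x, y, C.rfl, Or.inl hxy, C.rfl⟩
  have cr : ∀ x y z, ReflTransGen (S r t) x y → ReflTransGen (S r t) x z →
      ∃ d, ReflTransGen (S r t) y d ∧ ReflTransGen (S r t) z d := fun x y z h1 h2 =>
    church_rosser (fun x y z h h' => by
      obtain ⟨d, h1, h2⟩ := S.symm_diamond g h h'
      exact ⟨d, ReflGen.single h1, ReflTransGen.single h2⟩) h1 h2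
  induction h with
  | refl => exact ⟨a, ReflTransGen.refl, ReflTransGen.refl⟩
  | tail _ h ih =>
    obtain ⟨d, h1, h2⟩ := ih
    rcases h with h | h
    · obtain ⟨e, h3, h4⟩ := cr _ _ _ h2 (ReflTransGen.single (one _ _ h))
      exact ⟨e, h1.trans h3, h4⟩
    · exact ⟨d, h1, ReflTransGen.head (one _ _ h) h2⟩

theorem C.split {m : L} (g : ∀ t, t < m → G r t) {a b : α} (h : C r m a b) :
    a = b ∨ ∃ t, t < m ∧ ∃ d, ReflTransGen (S r t) a d ∧ ReflTransGen (S r t) b d := by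
  rcases h.max_label with h | ⟨t, ht, h⟩
  · exact Or.inl h
  · exact Or.inr ⟨t, ht, conv_join (g t ht) h⟩

theorem lemA {t p : L} (g : G r t) (htp : t < p) {a u : α} (h : ReflTransGen (S r t) a u) :
    ∀ a0 y, C r t a0 a → r p a0 y → ∃ u' y', C r t u' u ∧ E r p u' y' ∧ C r p y y' := by
  induction h using ReflTransGen.head_induction_on with
  | refl => exact fun a0 y h1 h2 => ⟨a0, y, h1, Or.inl h2, C.rfl⟩
  | head hs hss ih =>
    intro a0 y h1 h2
    obtain ⟨x, x', k1, k2, k3⟩ := hs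
    rcases k2 with k2 | rfl
    · obtain ⟨b1, b2, c2, c1, l1, l2, l3, l4, l5⟩ :=
        g p t htp.le le_rfl y a0 x x' h2 (h1.trans k1) k2
      rw [max_eq_left htp.le] at l3
      have hy : C r p y c2 := l1.trans ((l2.toC htp).trans l3)
      rcases l4 with l4 | rfl
      · obtain ⟨u', y', m1, m2, m3⟩ := ih c1 c2 (l5.trans k3) l4
        exact ⟨u', y', m1, m2, hy.trans m3⟩
      · exact ⟨u, u, C.rfl, Or.inr rfl,
          hy.trans (((l5.trans k3).mono htp.le).trans (SS.toC htp hss))⟩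
    · exact ih a0 y (h1.trans (k1.trans k3)) h2

theorem lemB {t m : L} (bb : BB r t) (htm : t < m) {b u : α} (h : ReflTransGen (S r t) b u) :
    ∀ b0, C r t b0 b → ∃ b', ReflTransGen (RelOver r {j | j < m}) b0 b' ∧ C r t b' u := by
  induction h using ReflTransGen.head_induction_on with
  | refl => exact fun b0 h => ⟨b0, ReflTransGen.refl, h⟩
  | head hs hss ih =>
    intro b0 h1
    obtain ⟨x, x', k1, k2, k3⟩ := hs
    rcases k2 with k2 | rfl
    · obtain ⟨w, w', l1, l2, l3⟩ := bb t le_rfl b0 x x' (h1.trans k1) k2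
      obtain ⟨b', m1, m2⟩ := ih w' (l3.trans k3)
      refine ⟨b', ?_, m2⟩
      have l1' : ReflTransGen (RelOver r {j | j < m}) b0 w :=
        ReflTransGen.mono (fun _ _ => relOver_mono (fun j hj => lt_trans hj htm)) _ _ l1
      rcases l2 with l2 | rfl
      · exact (l1'.tail ⟨t, htm, l2⟩).trans m1
      · exact l1'.trans m1
    · exact ih b0 (h1.trans (k1.trans k3))

theorem allG [WellFoundedLT L]
    (D : ∀ p q a y z, r p a y → r q a z → Concl r p q y z) (m : L) : G r m := by
  induction m using WellFoundedLT.induction with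
  | ind m ih =>
    intro p q hp hq y a b z hy hab hz
    rcases hab.split ih with rfl | ⟨t, ht, u, h1, h2⟩
    · exact D _ _ _ _ _ hy hz
    · have htp := lt_of_lt_of_le ht hp
      have htq := lt_of_lt_of_le ht hq
      obtain ⟨u1, y', k1, k2, k3⟩ := lemA (ih t ht) htp h1 a y C.rfl hy
      obtain ⟨u2, z', l1, l2, l3⟩ := lemA (ih t ht) htq h2 b z C.rfl hz
      have hu := k1.trans l1.symm
      rcases k2 with k2 | rfl
      · rcases l2 with l2 | rfl
        · obtain ⟨b1, b2, c2, c1, m1, m2, m3, m4, m5⟩ :=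
            ih t ht p q htp.le htq.le y' u1 u2 z' k2 hu l2
          exact ⟨b1, b2, c2, c1, k3.trans m1, m2, m3, m4, m5.trans l3.symm⟩
        · exact ⟨y', y', y', u1, k3, Or.inr rfl, C.rfl, Or.inl k2,
            (hu.mono htq.le).trans l3.symm⟩
      · exact ⟨u2, z', z', z', k3.trans (hu.mono htp.le), l2, C.rfl, Or.inr rfl, l3.symm⟩

theorem allBB [WellFoundedLT L] (g : ∀ t, G r t) (m : L) : BB r m := by
  induction m using WellFoundedLT.induction with
  | ind m ih =>
    intro p hp b a y hba hy
    rcases hba.split (fun t _ => g t) with rfl | ⟨t, ht, u, h1, h2⟩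
    · exact ⟨b, y, ReflTransGen.refl, Or.inl hy, C.rfl⟩
    · have htp := lt_of_lt_of_le ht hp
      obtain ⟨u1, y', k1, k2, k3⟩ := lemA (g t) htp h2 a y C.rfl hy
      obtain ⟨b', l1, l2⟩ := lemB (ih t ht) ht h1 b C.rfl
      have hu := l2.trans k1.symm
      rcases k2 with k2 | rfl
      · obtain ⟨b2, y2, m1, m2, m3⟩ := ih t ht p htp.le b' u1 y' hu k2
        exact ⟨b2, y2, l1.trans (ReflTransGen.mono
          (fun _ _ => relOver_mono (fun j hj => lt_trans hj ht)) _ _ m1), m2, m3.trans k3.symm⟩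
      · exact ⟨b', b', l1, Or.inr rfl, (hu.mono htp.le).trans k3.symm⟩

theorem allF [WellFoundedLT L] (g : ∀ t, G r t) (m : L) : ∀ b c, C r m b c →
    ∃ d, ReflTransGen (RelOver r {j | j < m}) b d ∧ ReflTransGen (RelOver r {j | j < m}) c d := by
  induction m using WellFoundedLT.induction with
  | ind m ih =>
    intro b c h
    rcases h.split (fun t _ => g t) with rfl | ⟨t, ht, u, h1, h2⟩
    · exact ⟨b, ReflTransGen.refl, ReflTransGen.refl⟩
    · obtain ⟨b', k1, k2⟩ := lemB (allBB g t) ht h1 b C.rfl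
      obtain ⟨c', l1, l2⟩ := lemB (allBB g t) ht h2 c C.rfl
      obtain ⟨d, m1, m2⟩ := ih t ht b' c' (k2.trans l2.symm)
      have mono : ∀ x y, ReflTransGen (RelOver r {j | j < t}) x y →
          ReflTransGen (RelOver r {j | j < m}) x y := fun x y h => ReflTransGen.mono
            (fun _ _ => relOver_mono (fun j hj => lt_trans hj ht)) _ _ h
      exact ⟨d, k1.trans (mono _ _ m1), l1.trans (mono _ _ m2)⟩

end

end DD

/-- Decreasing diagrams imply confluence (van Oostrom). Here `lt j l` means `l ≻ j`. -/
theorem stmt_0 {α I : Type*} (lt : I → I → Prop)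
    (htrans : Transitive lt) (hwf : WellFounded lt)
    (r : I → α → α → Prop)
    (hdec : ∀ l k a b c, r l a b → r k a c →
      ∃ b₁ b₂ c₂ c₁,
        Conv (RelOver r {j | lt j l}) b b₁ ∧
        (r k b₁ b₂ ∨ b₁ = b₂) ∧
        Conv (RelOver r ({j | lt j l} ∪ {j | lt j k})) b₂ c₂ ∧
        (r l c₁ c₂ ∨ c₁ = c₂) ∧
        Conv (RelOver r {j | lt j k}) c₁ c) :
    ∀ a b c, Relation.ReflTransGen (LabelledUnion r) a b →
      Relation.ReflTransGen (LabelledUnion r) a c →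
      ∃ d, Relation.ReflTransGen (LabelledUnion r) b d ∧
           Relation.ReflTransGen (LabelledUnion r) c d := by
  classical
  haveI : IsWellFounded I lt := ⟨hwf⟩
  let rk : I → WithTop Ordinal := fun l => ((IsWellFounded.rank lt l : Ordinal) : WithTop Ordinal)
  have hrk : ∀ {j l}, lt j l → rk j < rk l := fun h =>
    WithTop.coe_lt_coe.2 (IsWellFounded.rank_lt_of_rel h)
  let r' : WithTop Ordinal → α → α → Prop := fun o a b => ∃ l, rk l = o ∧ r l a b
  have conv : ∀ (J : Set I) (m : WithTop Ordinal), (∀ j ∈ J, rk j < m) → ∀ x y,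
      Conv (RelOver r J) x y → DD.C r' m x y := by
    intro J m hJ x y h
    refine DD.conv_mono ?_ h
    rintro x y ⟨l, hl, h⟩
    exact ⟨rk l, hJ l hl, l, rfl, h⟩
  have D : ∀ p q a y z, r' p a y → r' q a z → DD.Concl r' p q y z := by
    rintro p q a y z ⟨l, rfl, hl⟩ ⟨k, rfl, hk⟩
    obtain ⟨b1, b2, c2, c1, h1, h2, h3, h4, h5⟩ := hdec l k a y z hl hk
    refine ⟨b1, b2, c2, c1, conv _ _ (fun j hj => hrk hj) _ _ h1,
      h2.imp (fun h => ⟨k, rfl, h⟩) id, conv _ _ ?_ _ _ h3,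
      h4.imp (fun h => ⟨l, rfl, h⟩) id, conv _ _ (fun j hj => hrk hj) _ _ h5⟩
    rintro j (hj | hj)
    · exact lt_max_of_lt_left (hrk hj)
    · exact lt_max_of_lt_right (hrk hj)
  have toC : ∀ x y, Relation.ReflTransGen (LabelledUnion r) x y → DD.C r' ⊤ x y := by
    intro x y h
    refine Relation.ReflTransGen.mono ?_ _ _ h
    rintro x y ⟨l, h⟩
    exact Or.inl ⟨rk l, WithTop.coe_lt_top _, l, rfl, h⟩
  have back : ∀ x y, Relation.ReflTransGen (RelOver r' {j | j < ⊤}) x y →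
      Relation.ReflTransGen (LabelledUnion r) x y := by
    intro x y h
    refine Relation.ReflTransGen.mono ?_ _ _ h
    rintro x y ⟨_, _, l, _, h⟩
    exact ⟨l, h⟩
  intro a b c hb hc
  obtain ⟨d, h1, h2⟩ := DD.allF (DD.allG D) ⊤ b c ((toC _ _ hb).symm.trans (toC _ _ hc))
  exact ⟨d, back _ _ h1, back _ _ h2⟩
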